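/- (Closed form) Assume additionally that B_{∅,c} = 1 if c = ∅ and B_{∅,c} = 0 otherwise. Then for all a, b, b' ∈ Finset Pk, the sequence n ↦ Σ_{a' ∈ Finset Pk} (S^n)_{(a,b),(a',b')} converges as n → ∞, the sequence n ↦ ((S·U)^n)_{(a,b),(∅,b')} converges as n → ∞, and the two limits are equal. -/

import Mathlib

open scoped Classical

/-!
`U` only teleports saturated states, whose second component can no longer change, so inserting it
after every step does not affect the law of the second component: the `b'`-marginals of `S ^ n` and
`(S * U) ^ n` agree. In the chain `S * U` every `(∅, b')` is absorbing, and from every state one of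
these is reachable: as long as the state is unsaturated the second component can still grow
strictly, which happens finitely often. Hence the mass of `(S * U) ^ n` off the states `(∅, b')`
tends to `0`, while the mass at `(∅, b')` increases to a limit.
-/

open Filter Topology Matrix

section Support

variable {l m n R : Type*} [Fintype m]

lemma exists_ne_zero_of_mul_apply_ne_zero [NonUnitalNonAssocSemiring R] {M : Matrix l m R}
    {N : Matrix m n R} {i : l} {k : n} (h : (M * N) i k ≠ 0) : ∃ j, M i j ≠ 0 ∧ N j k ≠ 0 := by
  rw [mul_apply] at h
  obtain ⟨j, -, hj⟩ := Finset.exists_ne_zero_of_sum_ne_zero h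
  exact ⟨j, left_ne_zero_of_mul hj, right_ne_zero_of_mul hj⟩

lemma mul_apply_pos [Semiring R] [PartialOrder R] [IsStrictOrderedRing R] {M : Matrix l m R}
    {N : Matrix m n R} {i : l} {j : m} {k : n} (hM : ∀ i j, 0 ≤ M i j) (hN : ∀ i j, 0 ≤ N i j)
    (hij : 0 < M i j) (hjk : 0 < N j k) : 0 < (M * N) i k := by
  rw [mul_apply]
  exact Finset.sum_pos' (fun x _ => mul_nonneg (hM i x) (hN x k))
    ⟨j, Finset.mem_univ j, mul_pos hij hjk⟩

lemma le_of_pow_apply_ne_zero {β : Type*} [DecidableEq m] [Semiring R] [Preorder β]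
    {M : Matrix m m R} {f : m → β} (hf : ∀ i j, M i j ≠ 0 → f i ≤ f j) (n : ℕ) {i j : m}
    (h : (M ^ n) i j ≠ 0) : f i ≤ f j := by
  induction n generalizing j with
  | zero =>
    obtain rfl : i = j := by_contra fun hij => h (by rw [pow_zero, one_apply_ne hij])
    exact le_rfl
  | succ n ih =>
    rw [pow_succ] at h
    obtain ⟨k, hik, hkj⟩ := exists_ne_zero_of_mul_apply_ne_zero h
    exact (ih hik).trans (hf k j hkj)

end Support

section Absorbing

variable {ι R : Type*} [DecidableEq ι] [Semiring R] {M N : Matrix ι ι R} {i : ι}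

/-- The state `i` is absorbing for the transition matrix `M`: the chain stays at `i` almost surely,
that is, the row of `M` at `i` is the point mass at `i`. -/
def IsAbsorbing (M : Matrix ι ι R) (i : ι) : Prop :=
  M i = Pi.single i 1

variable [Fintype ι]

lemma IsAbsorbing.mulVec_apply (hM : IsAbsorbing M i) (v : ι → R) : (M *ᵥ v) i = v i := by
  rw [mulVec, hM, single_one_dotProduct]

lemma IsAbsorbing.mul (hM : IsAbsorbing M i) (hN : IsAbsorbing N i) : IsAbsorbing (M * N) i := by
  rw [IsAbsorbing, mul_apply_eq_vecMul, hM, single_one_vecMul, ← hN]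
  rfl

lemma IsAbsorbing.pow (hM : IsAbsorbing M i) (n : ℕ) : IsAbsorbing (M ^ n) i := by
  induction n with
  | zero =>
    ext j
    rw [pow_zero, one_eq_pi_single]
  | succ n ih =>
    rw [pow_succ]
    exact ih.mul hM

end Absorbing

section Stochastic

variable {ι R : Type*} [Fintype ι] [DecidableEq ι]

lemma mulVec_mono_of_mem_rowStochastic [Semiring R] [PartialOrder R] [IsOrderedRing R]
    {M : Matrix ι ι R} (hM : M ∈ rowStochastic R ι) : Monotone (M *ᵥ ·) :=
  fun _ _ hvw i => dotProduct_le_dotProduct_of_nonneg_left hvw (hM.1 i)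

lemma exists_apply_pos_of_mem_rowStochastic [Semiring R] [PartialOrder R] [IsOrderedRing R]
    [Nontrivial R] {M : Matrix ι ι R} (hM : M ∈ rowStochastic R ι) (i : ι) : ∃ j, 0 < M i j := by
  have hsum : ∑ j, M i j ≠ 0 := by
    rw [sum_row_of_mem_rowStochastic hM i]
    exact one_ne_zero
  obtain ⟨j, -, hj⟩ := Finset.exists_ne_zero_of_sum_ne_zero hsum
  exact ⟨j, (hM.1 i j).lt_of_ne' hj⟩

lemma IsAbsorbing.monotone_pow_apply [Semiring R] [PartialOrder R] [IsOrderedRing R]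
    {M : Matrix ι ι R} {j : ι} (hj : IsAbsorbing M j) (hM : M ∈ rowStochastic R ι) (i : ι) :
    Monotone fun n : ℕ => (M ^ n) i j :=
  monotone_nat_of_le_succ fun n =>
    calc (M ^ n) i j = (M ^ n) i j * M j j := by rw [hj, Pi.single_eq_same, mul_one]
      _ ≤ (M ^ n * M) i j := Finset.single_le_sum
          (fun k _ => mul_nonneg ((pow_mem hM n).1 i k) (hM.1 k j)) (Finset.mem_univ j)
      _ = (M ^ (n + 1)) i j := by rw [pow_succ]

lemma pow_mulVec_eq_self [Semiring R] {M : Matrix ι ι R} {r : ι → R} (hr : M *ᵥ r = r) (n : ℕ) :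
    M ^ n *ᵥ r = r := by
  induction n with
  | zero => rw [pow_zero, one_mulVec]
  | succ n ih => rw [pow_succ, ← mulVec_mulVec, hr, ih]

section MaximumPrinciple

variable [Ring R] [LinearOrder R] [IsStrictOrderedRing R] {M : Matrix ι ι R} {r : ι → R}

lemma eq_of_mulVec_eq_self_of_forall_le (hM : M ∈ rowStochastic R ι) (hr : M *ᵥ r = r)
    {i j : ι} (hi : ∀ k, r k ≤ r i) (hij : 0 < M i j) : r j = r i := by
  have hsum : ∑ k, M i k * (r i - r k) = 0 := by
    have hri : ∑ k, M i k * r k = r i := congrFun hr i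
    simp only [mul_sub, Finset.sum_sub_distrib, ← Finset.sum_mul,
      sum_row_of_mem_rowStochastic hM i, hri, one_mul, sub_self]
  have hzero : M i j * (r i - r j) = 0 := (Finset.sum_eq_zero_iff_of_nonneg fun k _ =>
    mul_nonneg (hM.1 i k) (sub_nonneg.2 (hi k))).1 hsum j (Finset.mem_univ j)
  exact (sub_eq_zero.1 ((mul_eq_zero.1 hzero).resolve_left hij.ne')).symm

lemma nonpos_of_mulVec_eq_self (hM : M ∈ rowStochastic R ι) (hr : M *ᵥ r = r)
    (hreach : ∀ i, ∃ n j, 0 < (M ^ n) i j ∧ r j ≤ 0) : r ≤ 0 := by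
  intro i
  have : Nonempty ι := ⟨i⟩
  obtain ⟨m, hm⟩ := Finite.exists_max r
  obtain ⟨n, j, hmj, hj⟩ := hreach m
  have hjm : r j = r m :=
    eq_of_mulVec_eq_self_of_forall_le (pow_mem hM n) (pow_mulVec_eq_self hr n) hm hmj
  exact (hm i).trans (hjm ▸ hj)

end MaximumPrinciple

variable {M : Matrix ι ι ℝ}

lemma tendsto_pow_mulVec_zero (hM : M ∈ rowStochastic ℝ ι) {q : ι → ℝ} (hq : 0 ≤ q)
    (hMq : M *ᵥ q ≤ q) (hreach : ∀ i, ∃ n j, 0 < (M ^ n) i j ∧ q j = 0) :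
    Tendsto (fun n : ℕ => M ^ n *ᵥ q) atTop (𝓝 0) := by
  have hnonneg (n : ℕ) : 0 ≤ M ^ n *ᵥ q := nonneg_mulVec_of_mem_rowStochastic (pow_mem hM n) hq
  have hanti : Antitone fun n : ℕ => M ^ n *ᵥ q := antitone_nat_of_succ_le fun n => by
    rw [pow_succ, ← mulVec_mulVec]
    exact mulVec_mono_of_mem_rowStochastic (pow_mem hM n) hMq
  obtain ⟨r, hr⟩ : ∃ r, Tendsto (fun n : ℕ => M ^ n *ᵥ q) atTop (𝓝 r) :=
    ⟨_, tendsto_atTop_ciInf hanti ⟨0, Set.forall_mem_range.2 hnonneg⟩⟩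
  have hMr : M *ᵥ r = r := by
    have hcont : Continuous (M *ᵥ ·) := continuous_const.matrix_mulVec continuous_id
    refine tendsto_nhds_unique ((hcont.tendsto r).comp hr) ?_
    simpa only [Function.comp_def, mulVec_mulVec, ← pow_succ'] using
      (tendsto_add_atTop_iff_nat 1).2 hr
  have hrq : r ≤ q := by simpa only [pow_zero, one_mulVec] using hanti.le_of_tendsto hr 0
  have hr_nonpos : r ≤ 0 := nonpos_of_mulVec_eq_self hM hMr fun i =>
    let ⟨n, j, hij, hj⟩ := hreach i
    ⟨n, j, hij, (hrq j).trans_eq hj⟩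
  rwa [hr_nonpos.antisymm (ge_of_tendsto' hr hnonneg)] at hr

lemma tendsto_pow_apply_zero_of_notMem (hM : M ∈ rowStochastic ℝ ι) {A : Set ι}
    (hA : ∀ i ∈ A, IsAbsorbing M i) (hreach : ∀ i, ∃ n, ∃ j ∈ A, 0 < (M ^ n) i j) (i : ι) {j : ι}
    (hj : j ∉ A) : Tendsto (fun n : ℕ => (M ^ n) i j) atTop (𝓝 0) := by
  let q : ι → ℝ := Aᶜ.indicator 1
  have hq_nonneg : 0 ≤ q := Set.indicator_nonneg fun _ _ => zero_le_one
  have hq_one (k : ι) (hk : k ∉ A) : q k = 1 := Set.indicator_of_mem hk 1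
  have hMq : M *ᵥ q ≤ q := fun k => by
    by_cases hk : k ∈ A
    · exact ((hA k hk).mulVec_apply q).le
    · calc (M *ᵥ q) k ≤ (M *ᵥ 1) k :=
            mulVec_mono_of_mem_rowStochastic hM
              (Set.indicator_le_self' fun _ _ => zero_le_one) k
        _ = q k := by rw [hM.2, hq_one k hk, Pi.one_apply]
  have hlim : Tendsto (fun n : ℕ => M ^ n *ᵥ q) atTop (𝓝 0) :=
    tendsto_pow_mulVec_zero hM hq_nonneg hMq fun k =>
      let ⟨n, l, hl, hkl⟩ := hreach k
      ⟨n, l, hkl, Set.indicator_of_notMem (Set.notMem_compl_iff.2 hl) 1⟩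
  refine squeeze_zero (fun n => (pow_mem hM n).1 i j) (fun n => ?_) (tendsto_pi_nhds.1 hlim i)
  calc (M ^ n) i j = (M ^ n) i j * q j := by rw [hq_one j hj, mul_one]
    _ ≤ (M ^ n *ᵥ q) i := Finset.single_le_sum
        (fun k _ => mul_nonneg ((pow_mem hM n).1 i k) (hq_nonneg k)) (Finset.mem_univ j)

lemma IsAbsorbing.exists_tendsto_pow_apply {j : ι} (hj : IsAbsorbing M j)
    (hM : M ∈ rowStochastic ℝ ι) (i : ι) :
    ∃ L, Tendsto (fun n : ℕ => (M ^ n) i j) atTop (𝓝 L) :=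
  ⟨_, tendsto_atTop_ciSup (hj.monotone_pow_apply hM i)
    ⟨1, Set.forall_mem_range.2 fun n => le_one_of_mem_rowStochastic (pow_mem hM n)⟩⟩

end Stochastic

section Marginal

variable {ι κ α β R : Type*} [Fintype α]

/-- The marginal on the second component of a kernel `M` from `ι` to `α × β`. -/
def sndMarginal [AddCommMonoid R] (M : Matrix ι (α × β) R) : Matrix ι β R :=
  of fun i b => ∑ a, M i (a, b)

lemma sndMarginal_mul [Fintype κ] [NonUnitalNonAssocSemiring R] (M : Matrix ι κ R)
    (N : Matrix κ (α × β) R) : sndMarginal (M * N) = M * sndMarginal N := by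
  ext i b
  simp only [sndMarginal, of_apply, mul_apply, Finset.mul_sum]
  exact Finset.sum_comm

lemma sndMarginal_eq_single [Fintype β] [DecidableEq α] [DecidableEq β] [Semiring R]
    [PartialOrder R] [IsOrderedRing R] {M : Matrix (α × β) (α × β) R}
    (hM : M ∈ rowStochastic R (α × β)) {s : α × β}
    (hs : ∀ t, 0 < M s t → t.2 = s.2) : sndMarginal M s = Pi.single s.2 1 := by
  have hne (b : β) (hb : b ≠ s.2) : sndMarginal M s b = 0 :=
    Finset.sum_eq_zero fun a _ => (hM.1 s (a, b)).eq_of_not_lt' fun h => hb (hs _ h)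
  have hsum : ∑ b, sndMarginal M s b = 1 := by
    rw [← sum_row_of_mem_rowStochastic hM s, Fintype.sum_prod_type_right]
    rfl
  ext b
  obtain rfl | hb := eq_or_ne b s.2
  · rw [Pi.single_eq_same, ← hsum, Fintype.sum_eq_single s.2 hne]
  · rw [hne b hb, Pi.single_eq_of_ne hb]

end Marginal

section Saturation

variable {α β R : Type*} [Fintype α] [Fintype β] [DecidableEq α] [DecidableEq β] [Semiring R]
  [PartialOrder R] {S : Matrix (α × β) (α × β) R} {e : α} {s t : α × β}

/-- A state of a chain on `α × β` is saturated if no state reachable from it has a different second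
component. -/
def IsSaturated (S : Matrix (α × β) (α × β) R) (s : α × β) : Prop :=
  ∀ (n : ℕ) (t : α × β), 0 < (S ^ n) s t → t.2 = s.2

lemma IsAbsorbing.isSaturated (hs : IsAbsorbing S s) : IsSaturated S s := by
  intro n t hst
  rw [hs.pow n, Pi.single_apply] at hst
  rw [(ite_ne_right_iff.1 hst.ne').1]

/-- The map on states behind the matrix `U`: the first component of a saturated state is reset to
`e` (which is `∅` in the application), all other states are left alone. -/
noncomputable def resetSaturated (S : Matrix (α × β) (α × β) R) (e : α) (s : α × β) : α × β :=
  if IsSaturated S s then (e, s.2) else s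

/-- The matrix `U`, as the deterministic transition matrix of `resetSaturated`. -/
noncomputable def resetMatrix (S : Matrix (α × β) (α × β) R) (e : α) :
    Matrix (α × β) (α × β) R :=
  of fun s => Pi.single (resetSaturated S e s) 1

lemma resetMatrix_apply (S : Matrix (α × β) (α × β) R) (e a a' : α) (b b' : β) :
    resetMatrix S e (a, b) (a', b') =
      if b' = b ∧ (IsSaturated S (a, b) ∧ a' = e ∨ ¬ IsSaturated S (a, b) ∧ a' = a)
      then 1 else 0 := by
  by_cases h : IsSaturated S (a, b) <;>
    simp [resetMatrix, resetSaturated, Pi.single_apply, h, and_comm]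

lemma resetMatrix_mul_apply {γ : Type*} (N : Matrix (α × β) γ R) (s : α × β) :
    (resetMatrix S e * N) s = N (resetSaturated S e s) := by
  rw [mul_apply_eq_vecMul]
  exact single_one_vecMul _ N

lemma isAbsorbing_resetMatrix (S : Matrix (α × β) (α × β) R) (e : α) (b : β) :
    IsAbsorbing (resetMatrix S e) (e, b) := by
  have hreset : resetSaturated S e (e, b) = (e, b) := ite_self _
  exact congrArg (Pi.single · 1) hreset

lemma resetMatrix_mem_rowStochastic [IsOrderedRing R] (S : Matrix (α × β) (α × β) R) (e : α) :
    resetMatrix S e ∈ rowStochastic R (α × β) := by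
  refine mem_rowStochastic_iff_sum.2 ⟨fun s => Pi.single_nonneg.2 zero_le_one, fun s => ?_⟩
  exact (Finset.univ.sum_pi_single' _ _).trans (if_pos (Finset.mem_univ _))

lemma resetMatrix_mul_sndMarginal_pow [IsOrderedRing R] (hS : S ∈ rowStochastic R (α × β))
    (he : ∀ b, IsAbsorbing S (e, b)) (n : ℕ) :
    resetMatrix S e * sndMarginal (S ^ n) = sndMarginal (S ^ n) := by
  funext s
  rw [resetMatrix_mul_apply]
  by_cases hs : IsSaturated S s
  · rw [resetSaturated, if_pos hs, sndMarginal_eq_single (pow_mem hS n) (hs n),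
      sndMarginal_eq_single (pow_mem hS n) ((he s.2).isSaturated n)]
  · rw [resetSaturated, if_neg hs]

lemma sndMarginal_mul_resetMatrix_pow [IsOrderedRing R] (hS : S ∈ rowStochastic R (α × β))
    (he : ∀ b, IsAbsorbing S (e, b)) (n : ℕ) :
    sndMarginal ((S * resetMatrix S e) ^ n) = sndMarginal (S ^ n) := by
  induction n with
  | zero => rw [pow_zero, pow_zero]
  | succ n ih =>
    rw [pow_succ', sndMarginal_mul, ih, Matrix.mul_assoc, resetMatrix_mul_sndMarginal_pow hS he,
      pow_succ', sndMarginal_mul]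

variable [IsStrictOrderedRing R]

lemma IsSaturated.of_apply_pos (hS : S ∈ rowStochastic R (α × β)) (hs : IsSaturated S s)
    (hst : 0 < S s t) : IsSaturated S t := by
  intro n u htu
  have hsu : 0 < (S ^ (n + 1)) s u := by
    rw [pow_succ']
    exact mul_apply_pos hS.1 (pow_mem hS n).1 hst htu
  rw [hs (n + 1) u hsu, hs 1 t (by rwa [pow_one])]

lemma IsSaturated.exists_mul_resetMatrix_apply_pos (hs : IsSaturated S s)
    (hS : S ∈ rowStochastic R (α × β)) : ∃ b, 0 < (S * resetMatrix S e) s (e, b) := by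
  obtain ⟨t, hst⟩ := exists_apply_pos_of_mem_rowStochastic hS s
  have ht : IsSaturated S t := hs.of_apply_pos hS hst
  refine ⟨t.2, mul_apply_pos hS.1 (resetMatrix_mem_rowStochastic S e).1 hst ?_⟩
  simp [resetMatrix, resetSaturated, ht]

lemma exists_mul_resetMatrix_pow_apply_pos_of_not_isSaturated [PartialOrder β]
    (hS : S ∈ rowStochastic R (α × β)) (hmono : ∀ s t, S s t ≠ 0 → s.2 ≤ t.2)
    (he : ∀ b, IsAbsorbing S (e, b)) (hs : ¬ IsSaturated S s) :
    ∃ n t, 0 < ((S * resetMatrix S e) ^ n) s t ∧ s.2 < t.2 := by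
  simp only [IsSaturated, not_forall] at hs
  obtain ⟨n, ⟨a, b⟩, hpos, hne⟩ := hs
  have hlt : s.2 < b := (le_of_pow_apply_ne_zero hmono n hpos.ne').lt_of_ne' hne
  have hmarginal : 0 < sndMarginal ((S * resetMatrix S e) ^ n) s b := by
    rw [sndMarginal_mul_resetMatrix_pow hS he]
    exact hpos.trans_le (Finset.single_le_sum (f := fun a => (S ^ n) s (a, b))
      (fun _ _ => (pow_mem hS n).1 _ _) (Finset.mem_univ a))
  obtain ⟨a', -, ha'⟩ := Finset.exists_ne_zero_of_sum_ne_zero hmarginal.ne'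
  have hT : S * resetMatrix S e ∈ rowStochastic R (α × β) :=
    mul_mem hS (resetMatrix_mem_rowStochastic S e)
  exact ⟨n, (a', b), ((pow_mem hT n).1 s _).lt_of_ne' ha', hlt⟩

lemma exists_mul_resetMatrix_pow_apply_pos [PartialOrder β] (hS : S ∈ rowStochastic R (α × β))
    (hmono : ∀ s t, S s t ≠ 0 → s.2 ≤ t.2) (he : ∀ b, IsAbsorbing S (e, b)) (s : α × β) :
    ∃ n b, 0 < ((S * resetMatrix S e) ^ n) s (e, b) := by
  have hT : S * resetMatrix S e ∈ rowStochastic R (α × β) :=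
    mul_mem hS (resetMatrix_mem_rowStochastic S e)
  obtain ⟨a, b⟩ := s
  induction b using WellFoundedGT.induction generalizing a with
  | ind b ih =>
    by_cases hs : IsSaturated S (a, b)
    · obtain ⟨c, hc⟩ := hs.exists_mul_resetMatrix_apply_pos hS
      exact ⟨1, c, by rwa [pow_one]⟩
    · obtain ⟨n, t, hst, hlt⟩ :=
        exists_mul_resetMatrix_pow_apply_pos_of_not_isSaturated hS hmono he hs
      obtain ⟨m, c, htc⟩ := ih t.2 hlt t.1
      refine ⟨n + m, c, ?_⟩
      rw [pow_add]
      exact mul_apply_pos (pow_mem hT n).1 (pow_mem hT m).1 hst htc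

end Saturation

section SmallStep

variable {α R : Type*} [DecidableEq α]

/-- The small-step matrix `S` of a big-step matrix `B` over a join-semilattice: a step moves the
current value `a` according to `B` and accumulates it into the second component. -/
def smallStep [Max α] [Zero R] (B : Matrix α α R) : Matrix (α × α) (α × α) R :=
  of fun s t => if t.2 = s.1 ⊔ s.2 then B s.1 t.1 else 0

lemma smallStep_mem_rowStochastic [Fintype α] [Max α] [Semiring R] [PartialOrder R]
    [IsOrderedRing R] {B : Matrix α α R} (hB : B ∈ rowStochastic R α) :
    smallStep B ∈ rowStochastic R (α × α) := by
  refine mem_rowStochastic_iff_sum.2 ⟨fun s t => ?_, fun s => ?_⟩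
  · exact ite_nonneg (hB.1 _ _) le_rfl
  · simp [smallStep, Fintype.sum_prod_type, sum_row_of_mem_rowStochastic hB]

lemma snd_le_snd_of_smallStep_ne_zero [SemilatticeSup α] [Zero R] {B : Matrix α α R}
    {s t : α × α} (h : smallStep B s t ≠ 0) : s.2 ≤ t.2 :=
  (ite_ne_right_iff.1 h).1 ▸ le_sup_right

lemma isAbsorbing_smallStep [SemilatticeSup α] [OrderBot α] [Semiring R] {B : Matrix α α R}
    (hB : IsAbsorbing B ⊥) (b : α) : IsAbsorbing (smallStep B) (⊥, b) := by
  ext ⟨a', b'⟩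
  simp only [smallStep, of_apply, bot_sup_eq, congrFun hB a', Pi.single_apply, Prod.mk.injEq]
  split_ifs <;> simp_all

end SmallStep

theorem closed_form_general {α β : Type*} [Fintype α] [Fintype β] [DecidableEq α]
    [DecidableEq β] [PartialOrder β] {S : Matrix (α × β) (α × β) ℝ} {e : α}
    (hS : S ∈ rowStochastic ℝ (α × β)) (hmono : ∀ s t, S s t ≠ 0 → s.2 ≤ t.2)
    (he : ∀ b, IsAbsorbing S (e, b)) (s : α × β) (b' : β) :
    ∃ L : ℝ, Tendsto (fun n : ℕ => ∑ a', (S ^ n) s (a', b')) atTop (𝓝 L) ∧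
      Tendsto (fun n : ℕ => ((S * resetMatrix S e) ^ n) s (e, b')) atTop (𝓝 L) := by
  have hT : S * resetMatrix S e ∈ rowStochastic ℝ (α × β) :=
    mul_mem hS (resetMatrix_mem_rowStochastic S e)
  have hTe (b : β) : IsAbsorbing (S * resetMatrix S e) (e, b) :=
    (he b).mul (isAbsorbing_resetMatrix S e b)
  obtain ⟨L, hL⟩ := (hTe b').exists_tendsto_pow_apply hT s
  have htransient (a : α) (ha : a ≠ e) :
      Tendsto (fun n : ℕ => ((S * resetMatrix S e) ^ n) s (a, b')) atTop (𝓝 0) := by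
    refine tendsto_pow_apply_zero_of_notMem hT (A := {t | t.1 = e}) ?_ (fun t => ?_) s ha
    · rintro ⟨_, b⟩ rfl
      exact hTe b
    · obtain ⟨n, b, htb⟩ := exists_mul_resetMatrix_pow_apply_pos hS hmono he t
      exact ⟨n, (e, b), rfl, htb⟩
  have hmarginal (n : ℕ) :
      ∑ a, (S ^ n) s (a, b') = ∑ a, ((S * resetMatrix S e) ^ n) s (a, b') :=
    congrFun₂ (sndMarginal_mul_resetMatrix_pow hS he n).symm s b'
  have hlim (a : α) : Tendsto (fun n : ℕ => ((S * resetMatrix S e) ^ n) s (a, b')) atTop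
      (𝓝 (if a = e then L else 0)) := by
    split_ifs with ha
    · exact ha ▸ hL
    · exact htransient a ha
  refine ⟨L, ?_, hL⟩
  simpa only [hmarginal, Finset.sum_ite_eq', Finset.mem_univ, if_true] using
    tendsto_finsetSum Finset.univ fun a _ => hlim a

/-- Closed form: `lim_n ∑_{a'} (S^n)_{(a,b),(a',b')}` exists, `lim_n ((S·U)^n)_{(a,b),(∅,b')}`
exists, and the two limits agree. -/
theorem closed_form {Pk : Type*} [Fintype Pk] [DecidableEq Pk]
    (B : Matrix (Finset Pk) (Finset Pk) ℝ)
    (hBnn : ∀ a a', 0 ≤ B a a')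
    (hBrow : ∀ a, ∑ a', B a a' = 1)
    (hBempty : ∀ c, B ∅ c = if c = ∅ then 1 else 0)
    (S U : Matrix (Finset Pk × Finset Pk) (Finset Pk × Finset Pk) ℝ)
    (hS : ∀ a b a' b', S (a, b) (a', b') = if b' = a ∪ b then B a a' else 0)
    (Saturated : Finset Pk × Finset Pk → Prop)
    (hSat : ∀ a b, Saturated (a, b) ↔
      ∀ (n : ℕ) (a' b' : Finset Pk), 0 < (S ^ n) (a, b) (a', b') → b' = b)
    (hU : ∀ a b a' b', U (a, b) (a', b') =
      if b' = b ∧ ((Saturated (a, b) ∧ a' = ∅) ∨ (¬ Saturated (a, b) ∧ a' = a))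
      then 1 else 0) :
    ∀ a b b' : Finset Pk, ∃ L : ℝ,
      Filter.Tendsto (fun n : ℕ => ∑ a', (S ^ n) (a, b) (a', b'))
        Filter.atTop (nhds L) ∧
      Filter.Tendsto (fun n : ℕ => ((S * U) ^ n) (a, b) ((∅ : Finset Pk), b'))
        Filter.atTop (nhds L) := by
  obtain rfl : S = smallStep B := by
    ext ⟨a, b⟩ ⟨a', b'⟩
    exact hS a b a' b'
  obtain rfl : U = resetMatrix (smallStep B) ∅ := by
    ext ⟨a, b⟩ ⟨a', b'⟩
    simp only [hU, hSat, resetMatrix_apply, IsSaturated, Prod.forall]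
  have hB : B ∈ rowStochastic ℝ (Finset Pk) := mem_rowStochastic_iff_sum.2 ⟨hBnn, hBrow⟩
  have hbot : IsAbsorbing B ∅ := funext fun c => by rw [hBempty, Pi.single_apply]
  exact fun a b => closed_form_general (smallStep_mem_rowStochastic hB)
    (fun _ _ => snd_le_snd_of_smallStep_ne_zero) (isAbsorbing_smallStep hbot) (a, b)
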